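/- arXiv:1703.05531 — 3 statements merged into one kernel-verified Lean document; each statement's English description precedes it below -/
import Mathlib

section
/- Let A be a u×v matrix with u,v ∈ ℕ and entries from ℚ. If A is image partition regular, then I(A) is a two-sided ideal of the semigroup (βℕ,·); that is, I(A) ≠ ∅ and for every p ∈ βℕ and every q ∈ I(A), both p·q ∈ I(A) and q·p ∈ I(A). -/
/- `ℕ+` plays the role of the paper's `ℕ = {1,2,3,…}`.  `Ultrafilter ℕ+` is `βℕ`. -/

/-- Product of ultrafilters: `U ∈ umul p q ↔ {x | {y | x*y ∈ U} ∈ q} ∈ p`. -/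
def umul (p q : Ultrafilter ℕ+) : Ultrafilter ℕ+ :=
  p.bind fun x => q.map fun y => x * y

/-- Sum of ultrafilters: `U ∈ uadd p q ↔ {x | {y | x+y ∈ U} ∈ q} ∈ p`. -/
def uadd (p q : Ultrafilter ℕ+) : Ultrafilter ℕ+ :=
  p.bind fun x => q.map fun y => x + y

/-- The matrix-vector product `Ax` (computed in `ℚ`) of a row-finite matrix `A`
with a vector `x` of positive integers. -/
noncomputable def mulVecQ {ι κ : Type} (A : ι → κ → ℚ) (x : κ → ℕ+) : ι → ℚ :=
  fun i => ∑ᶠ j, A i j * ((x j : ℕ) : ℚ)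

/-- All entries of the vector `y` are (positive) natural numbers lying in `P`. -/
def entriesIn {ι : Type} (y : ι → ℚ) (P : Set ℕ+) : Prop :=
  ∀ i, ∃ n ∈ P, y i = ((n : ℕ) : ℚ)

/-- `A` is image partition regular: for every finite coloring of `ℕ` there is
a vector `x` over `ℕ` all entries of whose image `Ax` are monochromatic. -/
def IPR {ι κ : Type} (A : ι → κ → ℚ) : Prop :=
  ∀ (r : ℕ) (c : ℕ+ → Fin r), ∃ (k : Fin r) (x : κ → ℕ+),
    entriesIn (mulVecQ A x) {n | c n = k}

/-- `I(A) = {p ∈ βℕ : for every P ∈ p there is x over ℕ with all entries of Ax in P}`. -/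
def ISet {ι κ : Type} (A : ι → κ → ℚ) : Set (Ultrafilter ℕ+) :=
  {p | ∀ P ∈ p, ∃ x : κ → ℕ+, entriesIn (mulVecQ A x) P}

/-!
Scaling `x` by `a ∈ ℕ` scales `Ax` by `a`. If `P ∈ p·q`, then `a⁻¹P ∈ q` for some `a`; an image
`Ax` inside `a⁻¹P` gives the image `A(ax)` inside `P`. If `P ∈ q·p`, there is an image `Ax` whose
entries `nᵢ` all satisfy `nᵢ⁻¹P ∈ p`; as there are finitely many, some `a` lies in every `nᵢ⁻¹P`,
and then `A(ax)` lies inside `P`. Finally `I(A) ≠ ∅` because, by partition regularity, finitely many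
sets containing no image of `A` cannot cover `ℕ`, so their complements have the finite intersection
property.
-/

section PartitionRegular

variable {α : Type*} {𝓕 : Set (Set α)}

theorem exists_mem_of_finite_sUnion_eq_univ (h𝓕 : IsUpperSet 𝓕)
    (hcolor : ∀ (r : ℕ) (c : α → Fin r), ∃ k, c ⁻¹' {k} ∈ 𝓕)
    {T : Set (Set α)} (hT : T.Finite) (hcover : ⋃₀ T = Set.univ) : ∃ B ∈ T, B ∈ 𝓕 := by
  have := hT.to_subtype
  obtain ⟨r, ⟨e⟩⟩ := Finite.exists_equiv_fin T
  have hmem : ∀ a, ∃ B : T, a ∈ (B : Set α) := by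
    simpa only [Set.sUnion_eq_univ_iff, Subtype.exists, exists_prop] using hcover
  choose B hB using hmem
  obtain ⟨k, hk⟩ := hcolor r (e ∘ B)
  have hsub : e ∘ B ⁻¹' {k} ⊆ (e.symm k : Set α) := by
    rintro a rfl
    simpa only [Function.comp_apply, Equiv.symm_apply_apply] using hB a
  exact ⟨e.symm k, (e.symm k).2, h𝓕 hsub hk⟩

theorem exists_ultrafilter_sets_subset (h𝓕 : IsUpperSet 𝓕)
    (hcolor : ∀ (r : ℕ) (c : α → Fin r), ∃ k, c ⁻¹' {k} ∈ 𝓕) :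
    ∃ p : Ultrafilter α, ∀ P ∈ p, P ∈ 𝓕 := by
  obtain ⟨p, hp⟩ := Ultrafilter.exists_ultrafilter_of_finite_inter_nonempty {B | Bᶜ ∉ 𝓕} <| by
    intro T hT
    by_contra hempty
    have hcover : ⋃₀ (compl '' (T : Set (Set α))) = Set.univ := by
      rw [← Set.compl_sInter, Set.not_nonempty_iff_eq_empty.mp hempty, Set.compl_empty]
    obtain ⟨_, ⟨B, hBT, rfl⟩, hB⟩ :=
      exists_mem_of_finite_sUnion_eq_univ h𝓕 hcolor (T.finite_toSet.image _) hcover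
    exact hT hBT hB
  refine ⟨p, fun P hP => ?_⟩
  by_contra hP𝓕
  have hPc : Pᶜ ∈ p := hp (show Pᶜᶜ ∉ 𝓕 by rwa [compl_compl])
  exact Ultrafilter.compl_notMem_iff.mpr hP hPc

end PartitionRegular

theorem mem_umul {p q : Ultrafilter ℕ+} {P : Set ℕ+} :
    P ∈ umul p q ↔ {x | {y | x * y ∈ P} ∈ q} ∈ p :=
  Iff.rfl

section Matrix

variable {ι κ : Type} {A : ι → κ → ℚ} {y : ι → ℚ} {P Q : Set ℕ+}

theorem entriesIn.mono (hy : entriesIn y P) (hPQ : P ⊆ Q) : entriesIn y Q := fun i =>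
  (hy i).imp fun _ hn => ⟨hPQ hn.1, hn.2⟩

theorem entriesIn.smul {a : ℕ+} (hy : entriesIn y {n | a * n ∈ P}) :
    entriesIn (((a : ℕ) : ℚ) • y) P := by
  intro i
  obtain ⟨n, hn, hyn⟩ := hy i
  exact ⟨a * n, hn, by rw [Pi.smul_apply, hyn, smul_eq_mul, PNat.mul_coe, Nat.cast_mul]⟩

theorem entriesIn.eventually_smul [Finite ι] {l : Filter ℕ+}
    (hy : entriesIn y {n | {a | n * a ∈ P} ∈ l}) :
    ∀ᶠ a : ℕ+ in l, entriesIn (((a : ℕ) : ℚ) • y) P := by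
  refine Filter.eventually_all.mpr fun i => ?_
  obtain ⟨n, hn, hyn⟩ := hy i
  filter_upwards [hn] with a ha
  exact ⟨n * a, ha, by rw [Pi.smul_apply, hyn, smul_eq_mul, mul_comm, PNat.mul_coe, Nat.cast_mul]⟩

-- Where the sum defining an entry has infinite support, `∑ᶠ` is `0` on both sides.
theorem mulVecQ_smul (A : ι → κ → ℚ) (a : ℕ+) (x : κ → ℕ+) :
    mulVecQ A (a • x) = ((a : ℕ) : ℚ) • mulVecQ A x := by
  funext i
  calc ∑ᶠ j, A i j * (((a • x) j : ℕ) : ℚ)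
      = ∑ᶠ j, ((a : ℕ) : ℚ) • (A i j * ((x j : ℕ) : ℚ)) := finsum_congr fun j => by
        rw [Pi.smul_apply, smul_eq_mul, smul_eq_mul, PNat.mul_coe, Nat.cast_mul, mul_left_comm]
    _ = ((a : ℕ) : ℚ) • ∑ᶠ j, A i j * ((x j : ℕ) : ℚ) := (smul_finsum _ _).symm

theorem IPR.nonempty_ISet (hA : IPR A) : (ISet A).Nonempty := by
  have hupper : IsUpperSet {P | ∃ x, entriesIn (mulVecQ A x) P} :=
    fun _ _ hPQ ⟨x, hx⟩ => ⟨x, hx.mono hPQ⟩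
  exact exists_ultrafilter_sets_subset hupper hA

theorem ISet.umul_mem_left (p : Ultrafilter ℕ+) {q : Ultrafilter ℕ+} (hq : q ∈ ISet A) :
    umul p q ∈ ISet A := by
  intro P hP
  obtain ⟨a, ha⟩ := Ultrafilter.nonempty_of_mem (mem_umul.mp hP)
  obtain ⟨x, hx⟩ := hq _ ha
  exact ⟨a • x, mulVecQ_smul A a x ▸ hx.smul⟩

theorem ISet.umul_mem_right [Finite ι] (p : Ultrafilter ℕ+) {q : Ultrafilter ℕ+}
    (hq : q ∈ ISet A) : umul q p ∈ ISet A := by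
  intro P hP
  obtain ⟨x, hx⟩ := hq _ (mem_umul.mp hP)
  obtain ⟨a, ha⟩ := (entriesIn.eventually_smul (l := p) hx).exists
  exact ⟨a • x, mulVecQ_smul A a x ▸ ha⟩

end Matrix

theorem stmt_1_general {ι κ : Type} [Finite ι] (A : ι → κ → ℚ) (hA : IPR A) :
    (ISet A).Nonempty ∧
      (∀ (p : Ultrafilter ℕ+), ∀ q ∈ ISet A, umul p q ∈ ISet A) ∧
      (∀ (p : Ultrafilter ℕ+), ∀ q ∈ ISet A, umul q p ∈ ISet A) :=
  ⟨hA.nonempty_ISet, fun p _ hq => ISet.umul_mem_left p hq,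
    fun p _ hq => ISet.umul_mem_right p hq⟩

/-- Lemma 2.3(b): if the finite `u×v` matrix `A` with rational
entries is image partition regular, then `I(A)` is a two-sided ideal of `(βℕ,·)`. -/
theorem stmt_1 {u v : ℕ} (A : Fin u → Fin v → ℚ) (hA : IPR A) :
    (ISet A).Nonempty ∧
      (∀ (p : Ultrafilter ℕ+), ∀ q ∈ ISet A, umul p q ∈ ISet A) ∧
      (∀ (p : Ultrafilter ℕ+), ∀ q ∈ ISet A, umul q p ∈ ISet A) :=
  stmt_1_general A hA
end

section
/- Let A be a finite (u×v with u,v ∈ ℕ) kernel partition regular matrix with entries from ℚ. Then J(A) is a two-sided ideal of the semigroup (βℕ,·); that is, J(A) ≠ ∅ and for every p ∈ βℕ and every q ∈ J(A), both p·q ∈ J(A) and q·p ∈ J(A). -/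
/-- `A` is kernel partition regular: for every finite coloring of `ℕ` there is a
monochromatic vector `x` with `Ax = 0`. -/
def KPR {ι κ : Type} (A : ι → κ → ℚ) : Prop :=
  ∀ (r : ℕ) (c : ℕ+ → Fin r), ∃ (k : Fin r) (x : κ → ℕ+),
    (∀ j, c (x j) = k) ∧ ∀ i, ∑ᶠ j, A i j * ((x j : ℕ) : ℚ) = 0

/-- `J(A) = {p ∈ βℕ : for every P ∈ p there is x with all entries in P and Ax = 0}`. -/
def JSet {ι κ : Type} (A : ι → κ → ℚ) : Set (Ultrafilter ℕ+) :=
  {p | ∀ P ∈ p, ∃ x : κ → ℕ+,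
    (∀ j, x j ∈ P) ∧ ∀ i, ∑ᶠ j, A i j * ((x j : ℕ) : ℚ) = 0}

/-!
Call a set a transversal if it contains an entry of every solution of `Ax = 0`. By partition
regularity, finitely many transversals have a common point: otherwise color each number by a
transversal it misses. Hence some ultrafilter contains all transversals; the complement of a member
is then not a transversal, so the member contains all entries of a solution. The ideal property
holds because solutions are closed under scaling. For `q · p` with `q ∈ J(A)`, each entry `x j` of a
solution has its own set of admissible scalars in `p`; these finitely many sets intersect.
-/

/-- The configurations `K` are partition regular: every finite coloring of `α` makes some vector of
`K` monochromatic. -/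
def IsPartitionRegular {α κ : Type*} (K : Set (κ → α)) : Prop :=
  ∀ (r : ℕ) (c : α → Fin r), ∃ (k : Fin r) (x : κ → α), (∀ j, c (x j) = k) ∧ x ∈ K

/-- The ultrafilters witnessing the partition regularity of `K`: each of their members contains all
entries of some vector of `K`. -/
def ramseyWitnesses {α κ : Type*} (K : Set (κ → α)) : Set (Ultrafilter α) :=
  {p | ∀ P ∈ p, ∃ x : κ → α, (∀ j, x j ∈ P) ∧ x ∈ K}

/-- The sets that contain at least one entry of every vector of `K`. -/
def transversals {α κ : Type*} (K : Set (κ → α)) : Set (Set α) :=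
  {Q | ∀ x ∈ K, ∃ j, x j ∈ Q}

section PartitionRegular

variable {α κ : Type*} {K : Set (κ → α)}

theorem IsPartitionRegular.sInter_nonempty (hK : IsPartitionRegular K) (T : Finset (Set α))
    (hT : (T : Set (Set α)) ⊆ transversals K) : (⋂₀ (T : Set (Set α))).Nonempty := by
  by_contra hempty
  have exists_notMem (a : α) : ∃ Q : T, a ∉ (Q : Set α) := by
    by_contra! ha
    exact hempty ⟨a, fun Q hQ => ha ⟨Q, hQ⟩⟩
  choose missed notMem_missed using exists_notMem
  obtain ⟨k, x, hcolor, hxK⟩ := hK T.card fun a => T.equivFin (missed a)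
  obtain ⟨j, hj⟩ := hT (T.equivFin.symm k).2 x hxK
  have missed_eq : missed (x j) = T.equivFin.symm k := T.equivFin.eq_symm_apply.2 (hcolor j)
  exact notMem_missed (x j) (missed_eq ▸ hj)

theorem mem_ramseyWitnesses_of_transversals_subset {p : Ultrafilter α}
    (hp : transversals K ⊆ p.sets) : p ∈ ramseyWitnesses K := by
  intro P hP
  have compl_notMem : Pᶜ ∉ transversals K := fun hPc =>
    Ultrafilter.compl_mem_iff_notMem.1 (hp hPc) hP
  obtain ⟨x, hxK, hxP⟩ : ∃ x ∈ K, ∀ j, x j ∉ Pᶜ := by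
    simpa only [transversals, Set.mem_ofPred_eq, not_forall, not_exists, exists_prop]
      using compl_notMem
  exact ⟨x, fun j => Set.notMem_compl_iff.1 (hxP j), hxK⟩

theorem IsPartitionRegular.nonempty_ramseyWitnesses (hK : IsPartitionRegular K) :
    (ramseyWitnesses K).Nonempty :=
  let ⟨p, hp⟩ := Ultrafilter.exists_ultrafilter_of_finite_inter_nonempty _ hK.sInter_nonempty
  ⟨p, mem_ramseyWitnesses_of_transversals_subset hp⟩

end PartitionRegular

section Ideal

attribute [local instance] Ultrafilter.mul

variable {M κ : Type*} [Mul M] {K : Set (κ → M)} {q : Ultrafilter M}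

theorem mul_mem_ramseyWitnesses_left (hK : ∀ a, ∀ x ∈ K, (fun j => a * x j) ∈ K)
    (p : Ultrafilter M) (hq : q ∈ ramseyWitnesses K) : p * q ∈ ramseyWitnesses K := by
  intro P hP
  have hP : ∀ᶠ a in p, ∀ᶠ b in q, a * b ∈ P := (Ultrafilter.eventually_mul p q (· ∈ P)).1 hP
  obtain ⟨a, ha⟩ := hP.exists
  obtain ⟨x, hxP, hxK⟩ := hq _ ha
  exact ⟨fun j => a * x j, hxP, hK a x hxK⟩

theorem mul_mem_ramseyWitnesses_right [Finite κ] (hK : ∀ a, ∀ x ∈ K, (fun j => x j * a) ∈ K)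
    (p : Ultrafilter M) (hq : q ∈ ramseyWitnesses K) : q * p ∈ ramseyWitnesses K := by
  intro P hP
  have hP : ∀ᶠ b in q, ∀ᶠ a in p, b * a ∈ P := (Ultrafilter.eventually_mul q p (· ∈ P)).1 hP
  obtain ⟨x, hxP, hxK⟩ := hq _ hP
  obtain ⟨a, ha⟩ := (Filter.eventually_all.2 hxP).exists
  exact ⟨fun j => x j * a, ha, hK a x hxK⟩

theorem umul_eq_mul (p q : Ultrafilter ℕ+) : umul p q = p * q := rfl

end Ideal

/-- The solutions of `Ax = 0` in positive integers. -/
def posSolutions {ι κ : Type*} (A : ι → κ → ℚ) : Set (κ → ℕ+) :=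
  {x | ∀ i, ∑ᶠ j, A i j * ((x j : ℕ) : ℚ) = 0}

theorem const_mul_mem_posSolutions {ι κ : Type*} {A : ι → κ → ℚ} (a : ℕ+) {x : κ → ℕ+}
    (hx : x ∈ posSolutions A) : (fun j => a * x j) ∈ posSolutions A := fun i =>
  calc
    ∑ᶠ j, A i j * ((a * x j : ℕ+) : ℕ) = ∑ᶠ j, ((a : ℕ) : ℚ) * (A i j * (x j : ℕ)) := by
      simp only [PNat.mul_coe, Nat.cast_mul, mul_left_comm]
    _ = (a : ℕ) * ∑ᶠ j, A i j * (x j : ℕ) := (mul_finsum _ _).symm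
    _ = 0 := by rw [hx i, mul_zero]

theorem JSet_eq_ramseyWitnesses {ι κ : Type} (A : ι → κ → ℚ) :
    JSet A = ramseyWitnesses (posSolutions A) := rfl

theorem KPR.isPartitionRegular {ι κ : Type} {A : ι → κ → ℚ} (hA : KPR A) :
    IsPartitionRegular (posSolutions A) := hA

theorem stmt_7_general {ι κ : Type} [Finite κ] (A : ι → κ → ℚ) (hA : KPR A) :
    (JSet A).Nonempty ∧
      (∀ (p : Ultrafilter ℕ+), ∀ q ∈ JSet A, umul p q ∈ JSet A) ∧
      (∀ (p : Ultrafilter ℕ+), ∀ q ∈ JSet A, umul q p ∈ JSet A) := by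
  simp only [JSet_eq_ramseyWitnesses, umul_eq_mul]
  have mul_closed (a : ℕ+) (x : κ → ℕ+) (hx : x ∈ posSolutions A) :
      (fun j => x j * a) ∈ posSolutions A := by
    simpa only [mul_comm] using const_mul_mem_posSolutions a hx
  exact ⟨hA.isPartitionRegular.nonempty_ramseyWitnesses,
    fun p q hq => mul_mem_ramseyWitnesses_left (fun a x => const_mul_mem_posSolutions a) p hq,
    fun p q hq => mul_mem_ramseyWitnesses_right mul_closed p hq⟩

/-- Lemma 2.8(b): if the finite `u×v` matrix `A` with rational
entries is kernel partition regular, then `J(A)` is a two-sided ideal of `(βℕ,·)`. -/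
theorem stmt_7 {u v : ℕ} (A : Fin u → Fin v → ℚ) (hA : KPR A) :
    (JSet A).Nonempty ∧
      (∀ (p : Ultrafilter ℕ+), ∀ q ∈ JSet A, umul p q ∈ JSet A) ∧
      (∀ (p : Ultrafilter ℕ+), ∀ q ∈ JSet A, umul q p ∈ JSet A) :=
  stmt_7_general A hA
end

section
/- Let {x_t}_{t=1}^∞ be a sequence in ℕ and let p ∈ βℕ satisfy p ∈ ⋂_{k=1}^∞ cl(FS({x_t}_{t=k}^∞)). Then for every n ∈ ℕ, PS_n({x_t}_{t=1}^∞) ∈ p^n, where p^n denotes the n-fold product p·p·…·p in (βℕ,·). -/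
/-- `upow p m` is the `m`-fold product `p·p·…·p` in `(βℕ,·)` (for `m ≥ 1`). -/
def upow (p : Ultrafilter ℕ+) : ℕ → Ultrafilter ℕ+
  | 0 => p
  | 1 => p
  | n + 2 => umul (upow p (n + 1)) p

/-- `PSm m x` is `PS_m({x_t})`: all products `∏_{i=1}^m ∑_{t ∈ F_i} x_t` where
`F_1, …, F_m` are finite nonempty subsets of the index set with
`max F_i < min F_{i+1}`. -/
def PSm (m : ℕ) (x : ℕ → ℕ+) : Set ℕ+ :=
  {z | ∃ F : Fin m → Finset ℕ,
    (∀ i, (F i).Nonempty) ∧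
    (∀ i j : Fin m, i < j → ∀ a ∈ F i, ∀ b ∈ F j, a < b) ∧
    (z : ℕ) = ∏ i, ∑ t ∈ F i, (x t : ℕ)}

/-- `FSfrom x k` is `FS({x_t}_{t=k}^∞)`: all sums `∑_{t ∈ F} x_t` over finite
nonempty `F ⊆ {k, k+1, …}`. -/
def FSfrom (x : ℕ → ℕ+) (k : ℕ) : Set ℕ+ :=
  {z | ∃ F : Finset ℕ, F.Nonempty ∧ (∀ t ∈ F, k ≤ t) ∧
    (z : ℕ) = ∑ t ∈ F, (x t : ℕ)}

/-!
Given `a = ∏_{i ≤ n} ∑_{t ∈ F i} x t`, choose `k` above every index in the blocks `F i`. Multiplying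
`a` by any element of `FS({x_t}_{t=k}^∞)` appends a block to the right of all the others, so the
result lies in `PS_{n+1}`. Hence, if `q` contains every `FS({x_t}_{t=k}^∞)`, then `PS_n ∈ p` implies
`PS_{n+1} ∈ p·q`.
-/

/-- A block sequence: finitely many nonempty finite sets of indices, each lying entirely below the
later ones. For `ι = ℕ` these are the tuples `F_1, …, F_n` of the paper with
`max F_i < min F_{i+1}`, here required for all pairs `i < j` as in `PSm`. -/
structure IsBlockSequence {ι : Type*} [LT ι] {n : ℕ} (F : Fin n → Finset ι) : Prop where
  nonempty (i : Fin n) : (F i).Nonempty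
  lt_of_lt (i j : Fin n) (hij : i < j) : ∀ s ∈ F i, ∀ t ∈ F j, s < t

namespace IsBlockSequence

variable {ι : Type*} [LT ι]

theorem const_fin_one {G : Finset ι} (hG : G.Nonempty) :
    IsBlockSequence fun _ : Fin 1 => G where
  nonempty _ := hG
  lt_of_lt i j hij := absurd hij (Subsingleton.elim i j).not_lt

theorem snoc {n : ℕ} {F : Fin n → Finset ι} {G : Finset ι} (hF : IsBlockSequence F)
    (hG : G.Nonempty) (hFG : ∀ i, ∀ s ∈ F i, ∀ t ∈ G, s < t) :
    IsBlockSequence (Fin.snoc F G : Fin (n + 1) → Finset ι) where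
  nonempty := Fin.lastCases (by simpa using hG) (by simpa using hF.nonempty)
  lt_of_lt i j hij := by
    cases j using Fin.lastCases with
    | last =>
      obtain ⟨i, rfl⟩ := Fin.exists_castSucc_eq.mpr hij.ne
      simpa using hFG i
    | cast j =>
      obtain ⟨i, rfl⟩ := Fin.exists_castSucc_eq.mpr (hij.trans j.castSucc_lt_last).ne
      simpa using hF.lt_of_lt i j hij

end IsBlockSequence

theorem exists_forall_mem_lt {κ ι : Type*} [Finite κ] [Preorder ι] [IsDirectedOrder ι] [Nonempty ι]
    [NoMaxOrder ι] (F : κ → Finset ι) : ∃ k, ∀ i, ∀ t ∈ F i, t < k := by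
  obtain ⟨m, hm⟩ := (Set.finite_iUnion fun i => (F i).finite_toSet).bddAbove
  obtain ⟨k, hmk⟩ := exists_gt m
  exact ⟨k, fun i t ht => (hm (Set.mem_iUnion_of_mem i ht)).trans_lt hmk⟩

theorem mem_PSm_iff {x : ℕ → ℕ+} {n : ℕ} {z : ℕ+} :
    z ∈ PSm n x ↔
      ∃ F : Fin n → Finset ℕ, IsBlockSequence F ∧ (z : ℕ) = ∏ i, ∑ t ∈ F i, (x t : ℕ) :=
  ⟨fun ⟨F, hne, hlt, hz⟩ => ⟨F, ⟨hne, hlt⟩, hz⟩,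
    fun ⟨F, hF, hz⟩ => ⟨F, hF.nonempty, hF.lt_of_lt, hz⟩⟩

theorem FSfrom_subset_PSm_one (x : ℕ → ℕ+) (k : ℕ) : FSfrom x k ⊆ PSm 1 x := by
  rintro z ⟨G, hG, -, hz⟩
  exact mem_PSm_iff.mpr ⟨fun _ => G, .const_fin_one hG, by simpa using hz⟩

theorem exists_forall_mem_FSfrom_mul_mem_PSm_succ {x : ℕ → ℕ+} {n : ℕ} {a : ℕ+}
    (ha : a ∈ PSm n x) : ∃ k, ∀ b ∈ FSfrom x k, a * b ∈ PSm (n + 1) x := by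
  obtain ⟨F, hF, ha⟩ := mem_PSm_iff.mp ha
  obtain ⟨k, hFk⟩ := exists_forall_mem_lt F
  refine ⟨k, ?_⟩
  rintro b ⟨G, hG, hkG, hb⟩
  have hFG : ∀ i, ∀ s ∈ F i, ∀ t ∈ G, s < t :=
    fun i s hs t ht => (hFk i s hs).trans_le (hkG t ht)
  refine mem_PSm_iff.mpr ⟨Fin.snoc F G, hF.snoc hG hFG, ?_⟩
  simp [Fin.prod_univ_castSucc, ha, hb]

theorem mem_umul_iff {p q : Ultrafilter ℕ+} {U : Set ℕ+} :
    U ∈ umul p q ↔ {a | {b | a * b ∈ U} ∈ q} ∈ p :=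
  Iff.rfl

theorem upow_succ (p : Ultrafilter ℕ+) {n : ℕ} (hn : 0 < n) :
    upow p (n + 1) = umul (upow p n) p := by
  obtain ⟨m, rfl⟩ := Nat.exists_eq_add_one.mpr hn
  rfl

theorem PSm_succ_mem_umul {x : ℕ → ℕ+} {n : ℕ} {p q : Ultrafilter ℕ+} (hp : PSm n x ∈ p)
    (hq : ∀ k, FSfrom x k ∈ q) : PSm (n + 1) x ∈ umul p q := by
  rw [mem_umul_iff]
  filter_upwards [hp] with a ha
  obtain ⟨k, hk⟩ := exists_forall_mem_FSfrom_mul_mem_PSm_succ ha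
  exact Filter.mem_of_superset (hq k) hk

/-- Theorem 3.16: if `{x_t}` is a sequence in `ℕ` and
`p ∈ ⋂_k cl(FS({x_t}_{t=k}^∞))` (i.e. `FS({x_t}_{t=k}^∞) ∈ p` for every `k`),
then for every `n ∈ ℕ`, `PS_n({x_t}) ∈ p^n`. -/
theorem stmt_18 (x : ℕ → ℕ+) (p : Ultrafilter ℕ+)
    (hp : ∀ k : ℕ, FSfrom x k ∈ p) :
    ∀ n : ℕ, 0 < n → PSm n x ∈ upow p n := by
  intro n hn
  induction n, hn using Nat.le_induction with
  | base => exact Filter.mem_of_superset (hp 0) (FSfrom_subset_PSm_one x 0)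
  | succ n hn ih =>
    rw [upow_succ p hn]
    exact PSm_succ_mem_umul ih hp
end
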